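/- Let ψ: ℕ → (0,∞) with ψ(n) → ∞. Then the set E_inf(ψ) = { x ∈ (0,1] : liminf_{n→∞} (log d_n(x))/ψ(n) = 1 } has Hausdorff dimension 1/(1 + V), where log V = limsup_{n→∞} (log ψ(n))/n (so V ∈ [1,∞]; if V = ∞ the dimension is 0). -/

import Mathlib

open Filter Topology Real Set ENNReal

/-- The first Lüroth digit: `d₁(x) = ⌊1/x⌋ + 1`. -/
noncomputable def lurothD1 (x : ℝ) : ℕ := ⌊1 / x⌋₊ + 1

/-- The Lüroth map `T(x) = d₁(x)(d₁(x)-1)(x - 1/d₁(x))`. -/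
noncomputable def lurothT (x : ℝ) : ℝ :=
  (lurothD1 x : ℝ) * ((lurothD1 x : ℝ) - 1) * (x - 1 / (lurothD1 x : ℝ))

/-- The `n`-th Lüroth digit `dₙ(x) = d₁(T^{n-1}(x))`. -/
noncomputable def lurothDigit (n : ℕ) (x : ℝ) : ℕ := lurothD1 (lurothT^[n - 1] x)

/-!
**Upper bound.** Write `Lₙ` for the length of the cylinder of order `n` around `x`, `ℓₙ = -log Lₙ`,
and let `0 < W < V`. The digits of `x` tend to infinity with `ψ`, so only cylinders with eventually
large digits matter, and over these the sum of `Lₙ ^ t` converges as soon as `t > 1 / 2`. If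
`T ^ n x` were eventually larger than `Lₙ ^ β`, where `1 + 2 β < W`, then
`ℓₙ₊₁ ≤ (1 + 2 β) ℓₙ + O(1)`, so that `log dₙ`, and with it `ψ n`, would be `o(W ^ n)`. Hence `x`
lies infinitely often in the part `T ^ n x ≤ Lₙ ^ β` of its cylinder, of diameter at most
`Lₙ ^ (1 + β)`, and the dimension is at most any `s` with `(1 + β) s > 1 / 2`. Such a `β` exists
for every `s > 1 / (1 + W)`.

**Lower bound.** For `W > V` there is a majorant `u` of `ψ` with `uₖ₊₁ ≤ W uₖ` that equals `ψ`
infinitely often. With `sₖ ≈ exp uₖ`, every point with digits `dₖ ∈ [sₖ, 2 sₖ)` lies in the set.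
Reading `dₖ - sₖ` as Cantor series digits in the bases `sₖ` parametrises these points by `[0, 1)`,
and the growth condition on `u` makes the inverse Hölder continuous of every exponent
`σ < 1 / (1 + W)`.
-/

open Asymptotics MeasureTheory

open scoped NNReal

/-! ### Hausdorff dimension -/

-- The analogue of the Borel–Cantelli lemma: the sets outside a large finite index set cover the
-- limsup set, have small diameters, and contribute little to the sum.
lemma hausdorffMeasure_limsup_cofinite_eq_zero {X ι : Type*} [EMetricSpace X]
    [MeasurableSpace X] [BorelSpace X] [Countable ι] {t : ι → Set X} {s : ℝ} (hs : 0 < s)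
    (ht : ∑' i, Metric.ediam (t i) ^ s ≠ ∞) : μH[s] (limsup t cofinite) = 0 := by
  have htail := ENNReal.tendsto_tsum_compl_atTop_zero ht
  have hdiam : Tendsto (fun F : Finset ι => (∑' i : {i // i ∉ F}, Metric.ediam (t i) ^ s) ^ s⁻¹)
      atTop (𝓝 0) := by
    simpa [Function.comp_def, ENNReal.zero_rpow_of_pos (inv_pos.2 hs)] using
      (ENNReal.continuous_rpow_const (y := s⁻¹)).continuousAt.tendsto.comp htail
  refine le_antisymm ?_ zero_le
  calc μH[s] (limsup t cofinite)
      ≤ liminf (fun F : Finset ι => ∑' i : {i // i ∉ F}, Metric.ediam (t i) ^ s) atTop := by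
        refine Measure.hausdorffMeasure_le_liminf_tsum (ι := fun F : Finset ι => {i // i ∉ F}) s _ _
          hdiam (fun F i => t i) (Eventually.of_forall fun F i => ?_)
          (Eventually.of_forall fun F x hx => ?_)
        · rw [ENNReal.le_rpow_inv_iff hs]
          exact ENNReal.le_tsum (f := fun i : {i // i ∉ F} => Metric.ediam (t i) ^ s) i
        · rw [cofinite.limsup_set_eq] at hx
          obtain ⟨i, hxi, hiF⟩ := hx.exists_notMem_finset F
          exact mem_iUnion.2 ⟨⟨i, hiF⟩, hxi⟩
    _ = 0 := htail.liminf_eq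

lemma mul_dimH_le_dimH_image {X Y : Type*} [EMetricSpace X] [EMetricSpace Y] {f : X → Y}
    {S : Set X} {K r : ℝ≥0} (hr : 0 < r)
    (hf : ∀ x ∈ S, ∀ y ∈ S, edist x y ≤ K * edist (f x) (f y) ^ (r : ℝ)) :
    r * dimH S ≤ dimH (f '' S) := by
  rcases S.eq_empty_or_nonempty with rfl | ⟨x₀, -⟩
  · simp
  have : Nonempty X := ⟨x₀⟩
  have hinj : InjOn f S := fun x hx y hy hxy => by
    simpa [hxy, ENNReal.zero_rpow_of_pos (NNReal.coe_pos.2 hr)] using hf x hx y hy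
  have hinv := hinj.leftInvOn_invFunOn
  have hholder : HolderOnWith K r (Function.invFunOn f S) (f '' S) := by
    rintro _ ⟨x, hx, rfl⟩ _ ⟨y, hy, rfl⟩
    rw [hinv hx, hinv hy]
    exact hf x hx y hy
  have hdim := hholder.dimH_image_le hr
  rw [hinv.image_image] at hdim
  rw [mul_comm]
  exact ENNReal.mul_le_of_le_div hdim

/-! ### Sequences, sums and growth rates -/

lemma tsum_pi_prod {n : ℕ} {α : Fin n → Type*} (g : ∀ k, α k → ℝ≥0∞) :
    ∑' w : ∀ k, α k, ∏ k, g k (w k) = ∏ k, ∑' c, g k c := by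
  induction n with
  | zero => simp
  | succ n ih =>
    rw [← (Fin.consEquiv α).tsum_eq, ENNReal.tsum_prod', Fin.prod_univ_succ, ← ih,
      ← ENNReal.tsum_mul_right]
    refine tsum_congr fun a => ?_
    rw [← ENNReal.tsum_mul_left]
    exact tsum_congr fun w => by simp [Fin.consEquiv, Fin.prod_univ_succ]

lemma tsum_prod_range_ne_top {a : ℕ → ℝ≥0∞} {r : ℝ≥0∞} (hr : r < 1) (ha : ∀ k, a k ≠ ∞)
    (har : ∀ᶠ k in atTop, a k ≤ r) : ∑' n, ∏ k ∈ Finset.range n, a k ≠ ∞ := by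
  obtain ⟨N, hN⟩ := eventually_atTop.1 har
  have hfin : ∀ n, ∏ k ∈ Finset.range n, a k ≠ ∞ := fun n =>
    ENNReal.prod_ne_top fun k _ => ha k
  have htail : ∀ n, ∏ k ∈ Finset.range (n + N), a k ≤ (∏ k ∈ Finset.range N, a k) * r ^ n :=
    fun n => by
      rw [add_comm, Finset.prod_range_add]
      gcongr
      exact (Finset.prod_le_pow_card _ _ r fun k _ => hN _ (by omega)).trans_eq (by simp)
  rw [← ENNReal.summable.sum_add_tsum_nat_add' (k := N)]
  refine ENNReal.add_ne_top.2 ⟨ENNReal.sum_ne_top.2 fun n _ => hfin n,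
    ne_top_of_le_ne_top ?_ (ENNReal.tsum_le_tsum htail)⟩
  rw [ENNReal.tsum_mul_left, ENNReal.tsum_geometric]
  exact ENNReal.mul_ne_top (hfin N) (ENNReal.inv_ne_top.2 (tsub_pos_of_lt hr).ne')

lemma exists_tsum_Ici_le {g : ℕ → ℝ≥0∞} (hg : ∑' c, g c ≠ ∞) {ε : ℝ≥0∞} (hε : 0 < ε) :
    ∃ M : ℕ, ∑' c : Ici M, g c ≤ ε := by
  have htail := (ENNReal.tendsto_tsum_compl_atTop_zero hg).comp tendsto_finset_range
  obtain ⟨M, hM⟩ := (htail.eventually_le_const hε).exists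
  refine ⟨M, hM.trans' (le_of_eq ?_)⟩
  exact tsum_congr_set_coe g (t := {c | c ∉ Finset.range M}) (by ext; simp)

lemma isLittleO_pow_of_eventually_le_mul_add {u : ℕ → ℝ} {b b' c : ℝ} (hu : ∀ n, 0 ≤ u n)
    (hb : 1 ≤ b) (hbb' : b < b') (hc : 0 ≤ c) (h : ∀ᶠ n in atTop, u (n + 1) ≤ b * u n + c) :
    u =o[atTop] fun n => b' ^ n := by
  obtain ⟨q, hbq, hqb'⟩ := exists_between hbb'
  obtain ⟨m, hm⟩ := eventually_atTop.1 h
  have hq : 0 < q - 1 := by linarith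
  set K := c / (q - 1)
  have hK : (q - 1) * K = c := mul_div_cancel₀ _ hq.ne'
  have hK0 : 0 ≤ K := div_nonneg hc hq.le
  have hgeom : ∀ j, u (j + m) + K ≤ q ^ j * (u (0 + m) + K) := fun j =>
    le_geom (u := fun j => u (j + m) + K) (by linarith) j fun k _ => by
      have := hm (k + m) (by omega)
      rw [add_right_comm]
      nlinarith [hu (k + m)]
  have hO : (fun j => u (j + m)) =O[atTop] fun j => q ^ (j + m) := by
    refine IsBigO.of_bound (u (0 + m) + K) (Eventually.of_forall fun j => ?_)
    rw [Real.norm_of_nonneg (hu _), Real.norm_of_nonneg (pow_nonneg (by linarith) _),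
      mul_comm]
    have hqm : q ^ j ≤ q ^ (j + m) := pow_le_pow_right₀ (by linarith) (by omega)
    nlinarith [hgeom j, hu (0 + m)]
  have ho : (fun j => u (j + m)) =o[atTop] fun j => b' ^ (j + m) :=
    hO.trans_isLittleO ((isLittleO_pow_pow_of_lt_left (by linarith) hqb').comp_tendsto
      (tendsto_add_atTop_nat m))
  simpa [Function.comp_def] using ho.comp_tendsto (tendsto_sub_atTop_nat m) |>.congr'
    (by filter_upwards [eventually_ge_atTop m] with n hn using by simp [Nat.sub_add_cancel hn])
    (by filter_upwards [eventually_ge_atTop m] with n hn using by simp [Nat.sub_add_cancel hn])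

lemma isLittleO_succ_pow_iff {f : ℕ → ℝ} {b : ℝ} (hb : b ≠ 0) :
    ((fun k => f (k + 1)) =o[atTop] fun k => b ^ k) ↔ f =o[atTop] fun k => b ^ k := by
  rw [← isLittleO_const_mul_right_iff hb]
  conv_rhs => rw [← map_add_atTop_eq_nat 1, isLittleO_map]
  simp only [Function.comp_def, pow_succ']

lemma exists_antitone_majorant {α : Type*} [LinearOrder α] {a : ℕ → α}
    (ha : Tendsto a atTop atBot) :
    ∃ b : ℕ → α, Antitone b ∧ (∀ k, a k ≤ b k) ∧ ∃ᶠ k in atTop, b k = a k := by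
  have hmax : ∀ k, ∃ j, k ≤ j ∧ ∀ i, k ≤ i → a i ≤ a j := fun k => by
    rw [← Nat.cofinite_eq_atTop] at ha
    exact ha.exists_within_forall_ge nonempty_Ici
  choose J hkJ hJ using hmax
  refine ⟨fun k => a (J k), fun k l hkl => hJ k _ (hkl.trans (hkJ l)), fun k => hJ k k le_rfl,
    frequently_atTop.2 fun k => ⟨J k, hkJ k, ?_⟩⟩
  exact le_antisymm (hJ k _ ((hkJ k).trans (hkJ _))) (hJ (J k) _ le_rfl)

lemma exists_majorant_le_mul {φ : ℕ → ℝ} (hφ : ∀ k, 0 < φ k) {W : ℝ} (hW : 0 < W)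
    (h : φ =o[atTop] fun k => W ^ k) :
    ∃ u : ℕ → ℝ, (∀ k, φ k ≤ u k) ∧ (∀ k, u (k + 1) ≤ W * u k) ∧
      ∃ᶠ k in atTop, u k = φ k := by
  have hlim : Tendsto (fun k => Real.log (φ k / W ^ k)) atTop atBot :=
    Real.tendsto_log_nhdsGT_zero.comp (tendsto_nhdsWithin_iff.2 ⟨h.tendsto_div_nhds_zero,
      Eventually.of_forall fun k => div_pos (hφ k) (pow_pos hW k)⟩)
  obtain ⟨b, hb, hle, hfreq⟩ := exists_antitone_majorant hlim
  have hexp : ∀ k, W ^ k * Real.exp (Real.log (φ k / W ^ k)) = φ k := fun k => by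
    rw [Real.exp_log (div_pos (hφ k) (pow_pos hW k)), mul_div_cancel₀ _ (pow_pos hW k).ne']
  refine ⟨fun k => W ^ k * Real.exp (b k), fun k => ?_, fun k => ?_, hfreq.mono fun k hk => ?_⟩
  · calc φ k = W ^ k * Real.exp (Real.log (φ k / W ^ k)) := (hexp k).symm
      _ ≤ W ^ k * Real.exp (b k) := by gcongr; exact hle k
  · calc W ^ (k + 1) * Real.exp (b (k + 1)) ≤ W ^ (k + 1) * Real.exp (b k) := by
          gcongr
          exact hb k.le_succ
      _ = W * (W ^ k * Real.exp (b k)) := by ring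
  · simp only [hk, hexp]

lemma bddBelow_range_sum_of_eventually_nonneg {f : ℕ → ℝ} (hf : ∀ᶠ k in atTop, 0 ≤ f k) :
    BddBelow (range fun n => ∑ k ∈ Finset.range n, f k) := by
  obtain ⟨m, hm⟩ := eventually_atTop.1 hf
  refine IsBoundedUnder.bddBelow_range (isBoundedUnder_of_eventually_ge
    (a := ∑ k ∈ Finset.range m, f k) ?_)
  filter_upwards [eventually_ge_atTop m] with n hn
  refine Finset.sum_le_sum_of_subset_of_nonneg (Finset.range_subset_range.2 hn) fun k _ hk => ?_
  exact hm k (by simpa using hk)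

lemma le_add_mul_sum_of_le_mul {u : ℕ → ℝ} {W : ℝ} (hu : ∀ k, u (k + 1) ≤ W * u k) (n : ℕ) :
    u n ≤ u 0 + (W - 1) * ∑ k ∈ Finset.range n, u k := by
  induction n with
  | zero => simp
  | succ n ih =>
    rw [Finset.sum_range_succ]
    linarith [hu n]

lemma liminf_div_eq_one_of_frequently_le {u φ : ℕ → ℝ} {B : ℝ} (hφ : Tendsto φ atTop atTop)
    (hle : ∀ᶠ k in atTop, φ k ≤ u k) (hfreq : ∃ᶠ k in atTop, u k ≤ φ k + B) :
    liminf (fun k => u k / φ k) atTop = 1 := by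
  have hge : ∀ᶠ k in atTop, 1 ≤ u k / φ k := by
    filter_upwards [hle, hφ.eventually_gt_atTop 0] with k hk hpos
    rwa [one_le_div hpos]
  have hclose : ∀ ε : ℝ, 0 < ε → ∃ᶠ k in atTop, u k / φ k ≤ 1 + ε := fun ε hε => by
    refine (hfreq.and_eventually ((hφ.eventually_gt_atTop 0).and
      (hφ.eventually_ge_atTop (B / ε)))).mono fun k ⟨hk, hpos, hB⟩ => ?_
    rw [div_le_iff₀ hε] at hB
    rw [div_le_iff₀ hpos]
    linarith [hk]
  refine le_antisymm (le_of_forall_pos_le_add fun ε hε => ?_) ?_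
  · exact liminf_le_of_frequently_le (hclose ε hε) (isBoundedUnder_of_eventually_ge hge)
  · exact le_liminf_of_le (IsCoboundedUnder.of_frequently_le (hclose 1 one_pos)) hge

lemma eq_one_div_one_add_of_forall {x V : ℝ≥0∞} (hV : V ≠ 0)
    (hle : ∀ r : ℝ≥0, 0 < r → r < V → x ≤ 1 / (1 + r))
    (hge : ∀ r : ℝ≥0, V < r → 1 / (1 + r) ≤ x) :
    x = 1 / (1 + V) := by
  have hcont : Continuous fun v : ℝ≥0∞ => 1 / (1 + v) := by
    simp only [one_div]
    fun_prop
  refine le_antisymm ?_ ?_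
  · have hV0 := pos_iff_ne_zero.2 hV
    have := nhdsLT_neBot_of_exists_lt ⟨0, hV0⟩
    refine ge_of_tendsto (hcont.continuousWithinAt (s := Iio V) (x := V)) ?_
    filter_upwards [Ioo_mem_nhdsLT hV0] with v ⟨hv0, hvV⟩
    lift v to ℝ≥0 using ne_top_of_lt hvV
    exact hle v (by exact_mod_cast hv0) hvV
  · rcases eq_or_ne V ∞ with rfl | hV'
    · simp
    have := nhdsGT_neBot_of_exists_gt ⟨∞, lt_top_iff_ne_top.2 hV'⟩
    refine le_of_tendsto (hcont.continuousWithinAt (s := Ioi V) (x := V)) ?_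
    filter_upwards [Ioo_mem_nhdsGT (lt_top_iff_ne_top.2 hV')] with v ⟨hVv, hv⟩
    lift v to ℝ≥0 using hv.ne
    exact hge v hVv

section GrowthRate

variable {ψ : ℕ → ℝ} {V : ℝ≥0∞}

lemma one_le_of_log_eq_limsup (hψ : Tendsto ψ atTop atTop)
    (hV : ENNReal.log V = limsup (fun n : ℕ => ((Real.log (ψ n) / n : ℝ) : EReal)) atTop) :
    1 ≤ V := by
  rw [← ENNReal.log_le_log_iff, hV, ENNReal.log_one]
  refine le_limsup_of_frequently_le (Eventually.frequently ?_) (by isBoundedDefault)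
  filter_upwards [hψ.eventually_ge_atTop 1] with n hn
  exact EReal.coe_nonneg.2 (div_nonneg (Real.log_nonneg hn) n.cast_nonneg)

lemma log_nnreal_eq_coe_log_pow_div {r : ℝ≥0} (hr : 0 < r) {n : ℕ} (hn : 0 < n) :
    ENNReal.log r = ((Real.log ((r : ℝ) ^ n) / n : ℝ) : EReal) := by
  rw [ENNReal.log_of_nnreal hr.ne', Real.log_pow, mul_div_cancel_left₀ _ (by positivity)]

lemma isLittleO_pow_of_limsup_lt (hψ : Tendsto ψ atTop atTop)
    (hV : ENNReal.log V = limsup (fun n : ℕ => ((Real.log (ψ n) / n : ℝ) : EReal)) atTop)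
    {r : ℝ≥0} (hr : V < r) : ψ =o[atTop] fun n => (r : ℝ) ^ n := by
  obtain ⟨q, hVq, hqr⟩ := ENNReal.lt_iff_exists_nnreal_btwn.1 hr
  have hq : 0 < q := by exact_mod_cast pos_of_gt hVq
  have hlim : limsup (fun n : ℕ => ((Real.log (ψ n) / n : ℝ) : EReal)) atTop < ENNReal.log q :=
    hV ▸ ENNReal.log_lt_log hVq
  have hO : ψ =O[atTop] fun n => (q : ℝ) ^ n := by
    refine IsBigO.of_bound 1 ?_
    filter_upwards [eventually_lt_of_limsup_lt hlim (by isBoundedDefault),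
      hψ.eventually_gt_atTop 0, eventually_gt_atTop 0] with n hn hψn hn0
    rw [log_nnreal_eq_coe_log_pow_div hq hn0, EReal.coe_lt_coe_iff,
      div_lt_div_iff_of_pos_right (by exact_mod_cast hn0),
      Real.log_lt_log_iff hψn (by positivity)] at hn
    simpa [abs_of_pos hψn] using hn.le
  exact hO.trans_isLittleO (isLittleO_pow_pow_of_lt_left q.2 (by exact_mod_cast hqr))

lemma not_isLittleO_pow_of_lt_limsup (hψ : Tendsto ψ atTop atTop)
    (hV : ENNReal.log V = limsup (fun n : ℕ => ((Real.log (ψ n) / n : ℝ) : EReal)) atTop)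
    {r : ℝ≥0} (hr0 : 0 < r) (hr : r < V) : ¬ ψ =o[atTop] fun n => (r : ℝ) ^ n := by
  intro ho
  have hlim : ENNReal.log r < limsup (fun n : ℕ => ((Real.log (ψ n) / n : ℝ) : EReal)) atTop :=
    hV ▸ ENNReal.log_lt_log hr
  obtain ⟨n, hn, hle, hψn, hn0⟩ := ((frequently_lt_of_lt_limsup (by isBoundedDefault) hlim)
    |>.and_eventually ((ho.bound one_pos).and ((hψ.eventually_gt_atTop 0).and
      (eventually_gt_atTop 0)))).exists
  rw [log_nnreal_eq_coe_log_pow_div hr0 hn0, EReal.coe_lt_coe_iff,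
    div_lt_div_iff_of_pos_right (by exact_mod_cast hn0),
    Real.log_lt_log_iff (by positivity) hψn] at hn
  rw [one_mul, Real.norm_of_nonneg hψn.le, Real.norm_of_nonneg (by positivity)] at hle
  exact hn.not_ge hle

end GrowthRate

/-! ### Lüroth expansions -/

/-- The length of the interval `(1 / d, 1 / (d - 1)]` of points with first Lüroth digit `d ≥ 2`;
it takes the junk value `0` at `d = 0` and `d = 1`. -/
noncomputable def lurothBranchLength (d : ℕ) : ℝ := 1 / ((d : ℝ) * ((d : ℝ) - 1))

/-- The length of the cylinder of points whose first `n` Lüroth digits are `d 0, …, d (n - 1)`. -/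
noncomputable def lurothCylinderLength (d : ℕ → ℕ) (n : ℕ) : ℝ :=
  ∏ k ∈ Finset.range n, lurothBranchLength (d k)

/-- The sequence of Lüroth digits of `x`, indexed from `0`. -/
noncomputable def lurothDigits (x : ℝ) (k : ℕ) : ℕ := lurothDigit (k + 1) x

/-- The point with Lüroth digits `d 0, d 1, …`, given by its Lüroth series. -/
noncomputable def lurothSeries (d : ℕ → ℕ) : ℝ :=
  ∑' n, lurothCylinderLength d n * (1 / (d n : ℝ))

lemma lurothBranchLength_pos {d : ℕ} (hd : 2 ≤ d) : 0 < lurothBranchLength d := by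
  have : (2 : ℝ) ≤ d := by exact_mod_cast hd
  exact one_div_pos.2 (mul_pos (by linarith) (by linarith))

lemma one_div_add_lurothBranchLength {d : ℕ} (hd : 2 ≤ d) :
    1 / (d : ℝ) + lurothBranchLength d = 1 / ((d : ℝ) - 1) := by
  have : (2 : ℝ) ≤ d := by exact_mod_cast hd
  have : (d : ℝ) - 1 ≠ 0 := by linarith
  rw [lurothBranchLength]
  field_simp
  ring

lemma one_div_add_lurothBranchLength_le_one {d : ℕ} (hd : 2 ≤ d) :
    1 / (d : ℝ) + lurothBranchLength d ≤ 1 := by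
  have : (2 : ℝ) ≤ d := by exact_mod_cast hd
  rw [one_div_add_lurothBranchLength hd, div_le_one (by linarith)]
  linarith

lemma lurothCylinderLength_succ (d : ℕ → ℕ) (n : ℕ) :
    lurothCylinderLength d (n + 1) = lurothCylinderLength d n * lurothBranchLength (d n) :=
  Finset.prod_range_succ _ n

lemma lurothCylinderLength_pos {d : ℕ → ℕ} (hd : ∀ k, 2 ≤ d k) (n : ℕ) :
    0 < lurothCylinderLength d n :=
  Finset.prod_pos fun k _ => lurothBranchLength_pos (hd k)

lemma sum_range_lurothSeries_le {d : ℕ → ℕ} (hd : ∀ k, 2 ≤ d k) (n : ℕ) :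
    ∑ k ∈ Finset.range n, lurothCylinderLength d k * (1 / (d k : ℝ)) ≤
      1 - lurothCylinderLength d n := by
  induction n with
  | zero => simp [lurothCylinderLength]
  | succ n ih =>
    rw [Finset.sum_range_succ, lurothCylinderLength_succ]
    nlinarith [one_div_add_lurothBranchLength_le_one (hd n), lurothCylinderLength_pos hd n]

lemma lurothCylinderLength_le_one {d : ℕ → ℕ} (hd : ∀ k, 2 ≤ d k) (n : ℕ) :
    lurothCylinderLength d n ≤ 1 := by
  have hsum : 0 ≤ ∑ k ∈ Finset.range n, lurothCylinderLength d k * (1 / (d k : ℝ)) :=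
    Finset.sum_nonneg fun k _ => mul_nonneg (lurothCylinderLength_pos hd k).le (by positivity)
  linarith [sum_range_lurothSeries_le hd n]

section LurothMap

variable {x : ℝ} (hx : x ∈ Ioc (0 : ℝ) 1)
include hx

lemma two_le_lurothD1 : 2 ≤ lurothD1 x := by
  have : 1 ≤ ⌊1 / x⌋₊ := Nat.le_floor (by simpa using one_le_one_div hx.1 hx.2)
  rw [lurothD1]
  omega

lemma one_div_lurothD1_lt : 1 / (lurothD1 x : ℝ) < x := by
  rw [one_div_lt (by exact_mod_cast two_pos.trans_le (two_le_lurothD1 hx)) hx.1]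
  simpa [lurothD1] using Nat.lt_floor_add_one (1 / x)

lemma le_one_div_lurothD1_sub_one : x ≤ 1 / ((lurothD1 x : ℝ) - 1) := by
  have hD : (2 : ℝ) ≤ lurothD1 x := by exact_mod_cast two_le_lurothD1 hx
  rw [le_one_div hx.1 (by linarith)]
  simpa [lurothD1] using Nat.floor_le (one_div_pos.2 hx.1).le

lemma eq_one_div_add_lurothBranchLength_mul_lurothT :
    x = 1 / (lurothD1 x : ℝ) + lurothBranchLength (lurothD1 x) * lurothT x := by
  have hD : (2 : ℝ) ≤ lurothD1 x := by exact_mod_cast two_le_lurothD1 hx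
  have : (lurothD1 x : ℝ) - 1 ≠ 0 := by linarith
  rw [lurothT, lurothBranchLength]
  field_simp
  ring

lemma lurothT_mem : lurothT x ∈ Ioc (0 : ℝ) 1 := by
  have hb := lurothBranchLength_pos (two_le_lurothD1 hx)
  have hlt := one_div_lurothD1_lt hx
  have hle := le_one_div_lurothD1_sub_one hx
  have heq := eq_one_div_add_lurothBranchLength_mul_lurothT hx
  rw [← one_div_add_lurothBranchLength (two_le_lurothD1 hx)] at hle
  exact ⟨pos_of_mul_pos_right (a := lurothBranchLength (lurothD1 x)) (by linarith) hb.le,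
    le_of_mul_le_mul_left (a := lurothBranchLength (lurothD1 x)) (by linarith) hb⟩

lemma lurothT_iterate_mem (n : ℕ) : lurothT^[n] x ∈ Ioc (0 : ℝ) 1 := by
  induction n with
  | zero => exact hx
  | succ n ih =>
    rw [Function.iterate_succ_apply']
    exact lurothT_mem ih

lemma two_le_lurothDigits (k : ℕ) : 2 ≤ lurothDigits x k :=
  two_le_lurothD1 (lurothT_iterate_mem hx k)

lemma iterate_eq_one_div_add_lurothBranchLength_mul (n : ℕ) :
    lurothT^[n] x =
      1 / (lurothDigits x n : ℝ) + lurothBranchLength (lurothDigits x n) * lurothT^[n + 1] x := by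
  rw [Function.iterate_succ_apply']
  exact eq_one_div_add_lurothBranchLength_mul_lurothT (lurothT_iterate_mem hx n)

lemma sub_eq_lurothCylinderLength_mul_sub {y : ℝ} (hy : y ∈ Ioc (0 : ℝ) 1) {n : ℕ}
    (h : ∀ k < n, lurothDigits x k = lurothDigits y k) :
    x - y = lurothCylinderLength (lurothDigits x) n * (lurothT^[n] x - lurothT^[n] y) := by
  induction n with
  | zero => simp [lurothCylinderLength]
  | succ n ih =>
    have hxn := iterate_eq_one_div_add_lurothBranchLength_mul hx n
    have hyn := iterate_eq_one_div_add_lurothBranchLength_mul hy n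
    rw [← h n n.lt_succ_self] at hyn
    rw [ih fun k hk => h k (by omega), lurothCylinderLength_succ]
    linear_combination lurothCylinderLength (lurothDigits x) n * (hxn - hyn)

end LurothMap

lemma lurothD1_eq {x : ℝ} {d : ℕ} (hd : 2 ≤ d) (h1 : 1 / (d : ℝ) < x)
    (h2 : x ≤ 1 / ((d : ℝ) - 1)) : lurothD1 x = d := by
  obtain ⟨m, rfl⟩ := Nat.exists_eq_add_of_le' (one_le_two.trans hd)
  have hm : (0 : ℝ) < m := by exact_mod_cast (by omega : 0 < m)
  have hx : 0 < x := h1.trans_le' (by positivity)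
  rw [lurothD1, Nat.add_right_cancel_iff, Nat.floor_eq_iff (by positivity)]
  push_cast at h1 h2
  rw [add_sub_cancel_right] at h2
  exact ⟨(le_one_div hm hx).2 h2, (one_div_lt hx (by positivity)).2 h1⟩

section LurothSeries

variable {d : ℕ → ℕ} (hd : ∀ k, 2 ≤ d k)
include hd

lemma lurothSeries_term_nonneg (n : ℕ) : 0 ≤ lurothCylinderLength d n * (1 / (d n : ℝ)) :=
  mul_nonneg (lurothCylinderLength_pos hd n).le (by positivity)

lemma sum_range_lurothSeries_le_one (n : ℕ) :
    ∑ k ∈ Finset.range n, lurothCylinderLength d k * (1 / (d k : ℝ)) ≤ 1 :=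
  (sum_range_lurothSeries_le hd n).trans (sub_le_self _ (lurothCylinderLength_pos hd n).le)

lemma summable_lurothSeries : Summable fun n => lurothCylinderLength d n * (1 / (d n : ℝ)) :=
  summable_of_sum_range_le (lurothSeries_term_nonneg hd) (sum_range_lurothSeries_le_one hd)

lemma lurothSeries_mem : lurothSeries d ∈ Ioc (0 : ℝ) 1 := by
  refine ⟨(summable_lurothSeries hd).tsum_pos (lurothSeries_term_nonneg hd) 0 ?_,
    Real.tsum_le_of_sum_range_le (lurothSeries_term_nonneg hd) (sum_range_lurothSeries_le_one hd)⟩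
  have := hd 0
  exact mul_pos (lurothCylinderLength_pos hd 0) (by positivity)

lemma lurothSeries_eq_one_div_add :
    lurothSeries d =
      1 / (d 0 : ℝ) + lurothBranchLength (d 0) * lurothSeries fun k => d (k + 1) := by
  rw [lurothSeries, (summable_lurothSeries hd).tsum_eq_zero_add, lurothSeries, ← tsum_mul_left]
  congr 1
  · simp [lurothCylinderLength]
  · exact tsum_congr fun n => by rw [lurothCylinderLength, Finset.prod_range_succ']; ring!

lemma lurothD1_lurothSeries : lurothD1 (lurothSeries d) = d 0 := by
  have htail := lurothSeries_mem fun k => hd (k + 1)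
  have hb := lurothBranchLength_pos (hd 0)
  refine lurothD1_eq (hd 0) ?_ ?_
  · rw [lurothSeries_eq_one_div_add hd]
    exact lt_add_of_pos_right _ (mul_pos hb htail.1)
  · rw [lurothSeries_eq_one_div_add hd, ← one_div_add_lurothBranchLength (hd 0)]
    exact add_le_add_right (mul_le_of_le_one_right hb.le htail.2) _

lemma lurothT_lurothSeries : lurothT (lurothSeries d) = lurothSeries fun k => d (k + 1) := by
  have h := eq_one_div_add_lurothBranchLength_mul_lurothT (lurothSeries_mem hd)
  rw [lurothD1_lurothSeries hd] at h
  exact mul_left_cancel₀ (lurothBranchLength_pos (hd 0)).ne'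
    (add_left_cancel (h.symm.trans (lurothSeries_eq_one_div_add hd)))

lemma lurothT_iterate_lurothSeries (n : ℕ) :
    lurothT^[n] (lurothSeries d) = lurothSeries fun k => d (k + n) := by
  induction n with
  | zero => rfl
  | succ n ih =>
    rw [Function.iterate_succ_apply', ih, lurothT_lurothSeries fun k => hd _]
    simp only [add_assoc, add_comm 1]

lemma lurothDigits_lurothSeries : lurothDigits (lurothSeries d) = d := by
  ext n
  change lurothD1 (lurothT^[n] (lurothSeries d)) = d n
  rw [lurothT_iterate_lurothSeries hd, lurothD1_lurothSeries fun k => hd _, zero_add]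

end LurothSeries

/-- The set of points of `(0, 1]` whose Lüroth digits satisfy `liminf (log dₙ(x)) / ψ(n) = 1`. -/
def lurothEinf (ψ : ℕ → ℝ) : Set ℝ :=
  {x | x ∈ Ioc (0 : ℝ) 1 ∧ liminf (fun n => Real.log (lurothDigit n x) / ψ n) atTop = 1}

lemma mem_lurothEinf_iff {ψ : ℕ → ℝ} {x : ℝ} :
    x ∈ lurothEinf ψ ↔ x ∈ Ioc (0 : ℝ) 1 ∧
      liminf (fun k => Real.log (lurothDigits x k) / ψ (k + 1)) atTop = 1 := by
  rw [lurothEinf, mem_ofPred_eq, ← liminf_nat_add _ 1]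
  rfl

/-! ### The upper bound -/

/-- The points `x` of the cylinder with Lüroth digits `w` for which `T^n x` is at most the power
`β` of the length of the cylinder. As `T^n` is increasing and affine on the cylinder, they form its
lower end. -/
def lurothCylinderLowerEnd (β : ℝ) {n : ℕ} (w : Fin n → ℕ) : Set ℝ :=
  {x | x ∈ Ioc (0 : ℝ) 1 ∧ (∀ k : Fin n, lurothDigits x k = w k) ∧
    lurothT^[n] x ≤ lurothCylinderLength (lurothDigits x) n ^ β}

lemma lurothBranchLength_nonneg (d : ℕ) : 0 ≤ lurothBranchLength d := by
  rcases d with - | d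
  · simp [lurothBranchLength]
  · simp only [lurothBranchLength, Nat.cast_add_one, add_sub_cancel_right]
    positivity

lemma ediam_lurothCylinderLowerEnd_le {β : ℝ} (hβ : 0 ≤ 1 + β) {n : ℕ} (w : Fin n → ℕ) :
    Metric.ediam (lurothCylinderLowerEnd β w) ≤
      (∏ k, ENNReal.ofReal (lurothBranchLength (w k))) ^ (1 + β) := by
  refine Metric.ediam_le fun x ⟨hx, hxw, hxβ⟩ y ⟨hy, hyw, hyβ⟩ => ?_
  set L := lurothCylinderLength (lurothDigits x) n with hL
  have hLpos : 0 < L := lurothCylinderLength_pos (two_le_lurothDigits hx) n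
  have hxy : ∀ k < n, lurothDigits x k = lurothDigits y k := fun k hk =>
    (hxw ⟨k, hk⟩).trans (hyw ⟨k, hk⟩).symm
  have hLx : ∏ k, lurothBranchLength (w k) = L := by
    simp only [hL, lurothCylinderLength, Finset.prod_range, hxw]
  have hLy : lurothCylinderLength (lurothDigits y) n = L := by
    simp only [← hLx, lurothCylinderLength, Finset.prod_range, hyw]
  rw [hLy] at hyβ
  have hTxy : |lurothT^[n] x - lurothT^[n] y| ≤ L ^ β :=
    abs_sub_le_of_nonneg_of_le (lurothT_iterate_mem hx n).1.le hxβ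
      (lurothT_iterate_mem hy n).1.le hyβ
  rw [← ENNReal.ofReal_prod_of_nonneg fun k _ => lurothBranchLength_nonneg _, hLx,
    ENNReal.ofReal_rpow_of_nonneg hLpos.le hβ, edist_dist, Real.dist_eq,
    sub_eq_lurothCylinderLength_mul_sub hx hy hxy, abs_mul, abs_of_pos hLpos,
    Real.rpow_add hLpos, Real.rpow_one]
  gcongr

lemma dimH_setOf_frequently_iterate_le {A : ℕ → Set ℕ} {β : ℝ} {s : ℝ≥0} (hs : 0 < s)
    (hβ : 0 ≤ 1 + β)
    (hA : ∑' n, ∏ k ∈ Finset.range n,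
      ∑' c : A k, ENNReal.ofReal (lurothBranchLength c) ^ ((1 + β) * s) ≠ ∞) :
    dimH {x | x ∈ Ioc (0 : ℝ) 1 ∧ (∀ k, lurothDigits x k ∈ A k) ∧
      ∃ᶠ n in atTop, lurothT^[n] x ≤ lurothCylinderLength (lurothDigits x) n ^ β} ≤ s := by
  let t : (Σ n, ∀ k : Fin n, A k) → Set ℝ := fun i => lurothCylinderLowerEnd β fun k => i.2 k
  have ht : ∑' i, Metric.ediam (t i) ^ (s : ℝ) ≠ ∞ := by
    refine ne_top_of_le_ne_top hA ?_
    rw [ENNReal.tsum_sigma']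
    refine ENNReal.tsum_le_tsum fun n => ?_
    rw [Finset.prod_range, ← tsum_pi_prod fun (k : Fin n) (c : A k) =>
      ENNReal.ofReal (lurothBranchLength c) ^ ((1 + β) * s)]
    refine ENNReal.tsum_le_tsum fun w => ?_
    rw [ENNReal.prod_rpow_of_nonneg (by positivity), ENNReal.rpow_mul]
    gcongr
    exact ediam_lurothCylinderLowerEnd_le hβ _
  have hdim : dimH (limsup t cofinite) ≤ s := dimH_le_of_hausdorffMeasure_ne_top
    (by simp [hausdorffMeasure_limsup_cofinite_eq_zero (NNReal.coe_pos.2 hs) ht])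
  refine hdim.trans' (dimH_mono fun x ⟨hx, hxA, hfreq⟩ => ?_)
  rw [cofinite.limsup_set_eq, mem_ofPred_eq, ← frequently_cofinite_iff_infinite]
  let word : ℕ → Σ n, ∀ k : Fin n, A k := fun n => ⟨n, fun k => ⟨lurothDigits x k, hxA k⟩⟩
  have hword : Function.Injective word := fun m n hmn => congrArg Sigma.fst hmn
  rw [← Nat.cofinite_eq_atTop] at hfreq
  exact hword.tendsto_cofinite.frequently (hfreq.mono fun n hn => ⟨hx, fun k => rfl, hn⟩)

lemma lurothBranchLength_le (d : ℕ) : lurothBranchLength d ≤ 2 * (d : ℝ) ^ (-2 : ℝ) := by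
  rcases lt_or_ge d 2 with hd | hd
  · interval_cases d <;> simp [lurothBranchLength]
  · have hd' : (2 : ℝ) ≤ d := by exact_mod_cast hd
    rw [lurothBranchLength, Real.rpow_neg d.cast_nonneg, Real.rpow_two, ← div_eq_mul_inv,
      div_le_div_iff₀ (by nlinarith) (by positivity)]
    nlinarith

lemma summable_lurothBranchLength_rpow {t : ℝ} (ht : 1 / 2 < t) :
    Summable fun d => lurothBranchLength d ^ t := by
  refine Summable.of_nonneg_of_le (fun d => Real.rpow_nonneg (lurothBranchLength_nonneg d) t)
    (fun d => ?_) ((Real.summable_nat_rpow.2 (by linarith : -2 * t < -1)).mul_left (2 ^ t))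
  calc lurothBranchLength d ^ t ≤ (2 * (d : ℝ) ^ (-2 : ℝ)) ^ t :=
        Real.rpow_le_rpow (lurothBranchLength_nonneg d) (lurothBranchLength_le d) (by linarith)
    _ = 2 ^ t * (d : ℝ) ^ (-2 * t) := by
        rw [Real.mul_rpow zero_le_two (by positivity), ← Real.rpow_mul d.cast_nonneg]

-- All but finitely many digits may be taken so large that the sum over each of them is at most
-- `1 / 2`; the exponent then only has to make the sum over one digit converge.
lemma dimH_setOf_tendsto_lurothDigits_le {β : ℝ} {s : ℝ≥0} (hs : 1 / 2 < (1 + β) * s) :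
    dimH {x | x ∈ Ioc (0 : ℝ) 1 ∧ Tendsto (lurothDigits x) atTop atTop ∧
      ∃ᶠ n in atTop, lurothT^[n] x ≤ lurothCylinderLength (lurothDigits x) n ^ β} ≤ s := by
  have hprod : 0 < (1 + β) * s := by linarith
  have hβ : 0 ≤ 1 + β := (pos_of_mul_pos_left hprod s.2).le
  have hs0 : 0 < s := NNReal.coe_pos.1 (pos_of_mul_pos_right hprod hβ)
  set g : ℕ → ℝ≥0∞ := fun c => ENNReal.ofReal (lurothBranchLength c) ^ ((1 + β) * s) with hg
  have hgsum : ∑' c, g c ≠ ∞ := by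
    simp only [hg, ENNReal.ofReal_rpow_of_nonneg (lurothBranchLength_nonneg _) hprod.le]
    exact (summable_lurothBranchLength_rpow hs).tsum_ofReal_ne_top
  obtain ⟨M, hM⟩ := exists_tsum_Ici_le hgsum (ε := 2⁻¹) (by simp)
  let A : ℕ → ℕ → Set ℕ := fun N k => {c | N ≤ k → M ≤ c}
  have hA : ∀ N, ∑' n, ∏ k ∈ Finset.range n, ∑' c : A N k, g c ≠ ∞ := fun N => by
    refine tsum_prod_range_ne_top (r := 2⁻¹) (by simp) (fun k => ?_) ?_
    · exact ne_top_of_le_ne_top hgsum (ENNReal.tsum_comp_le_tsum_of_injective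
        Subtype.val_injective g)
    · filter_upwards [eventually_ge_atTop N] with k hk
      have : A N k = Ici M := by ext; simp [A, hk]
      rwa [this]
  refine ((dimH_iUnion _).trans_le (iSup_le fun N =>
    dimH_setOf_frequently_iterate_le hs0 hβ (hA N))).trans'
    (dimH_mono fun x ⟨hx, hlim, hfreq⟩ => mem_iUnion.2 ?_)
  obtain ⟨N, hN⟩ := eventually_atTop.1 (hlim.eventually_ge_atTop M)
  exact ⟨N, hx, hN, hfreq⟩

section FirstDigitBounds

variable {x : ℝ} (hx : x ∈ Ioc (0 : ℝ) 1)
include hx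

lemma lurothD1_le_two_div : (lurothD1 x : ℝ) ≤ 2 / x := by
  have hD : (2 : ℝ) ≤ lurothD1 x := by exact_mod_cast two_le_lurothD1 hx
  have h := le_one_div_lurothD1_sub_one hx
  rw [le_div_iff₀ (by linarith)] at h
  rw [le_div_iff₀ hx.1]
  linarith [hx.2]

lemma sq_div_two_le_lurothBranchLength : x ^ 2 / 2 ≤ lurothBranchLength (lurothD1 x) := by
  have hD : (2 : ℝ) ≤ lurothD1 x := by exact_mod_cast two_le_lurothD1 hx
  have h := le_one_div_lurothD1_sub_one hx
  have h2 := lurothD1_le_two_div hx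
  rw [le_div_iff₀ hx.1] at h2
  rw [le_div_iff₀ (by linarith)] at h
  rw [lurothBranchLength, div_le_div_iff₀ two_pos (by nlinarith)]
  nlinarith [mul_le_mul h2 h (mul_nonneg hx.1.le (by linarith)) two_pos.le]

lemma neg_log_lurothCylinderLength_nonneg (n : ℕ) :
    0 ≤ -Real.log (lurothCylinderLength (lurothDigits x) n) :=
  neg_nonneg.2 (Real.log_nonpos (lurothCylinderLength_pos (two_le_lurothDigits hx) n).le
    (lurothCylinderLength_le_one (two_le_lurothDigits hx) n))

lemma log_lurothDigits_le (n : ℕ) :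
    Real.log (lurothDigits x n) ≤ Real.log 2 - Real.log (lurothT^[n] x) := by
  have hT := lurothT_iterate_mem hx n
  have hd := two_le_lurothDigits hx n
  rw [← Real.log_div two_ne_zero hT.1.ne']
  exact Real.log_le_log (by positivity) (lurothD1_le_two_div hT)

lemma neg_log_lurothCylinderLength_succ_le (n : ℕ) :
    -Real.log (lurothCylinderLength (lurothDigits x) (n + 1)) ≤
      -Real.log (lurothCylinderLength (lurothDigits x) n) + Real.log 2 -
        2 * Real.log (lurothT^[n] x) := by
  have hT := lurothT_iterate_mem hx n
  have hd := two_le_lurothDigits hx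
  have h : Real.log (lurothT^[n] x ^ 2 / 2) ≤ Real.log (lurothBranchLength (lurothDigits x n)) :=
    Real.log_le_log (by have := hT.1; positivity) (sq_div_two_le_lurothBranchLength hT)
  rw [Real.log_div (pow_ne_zero 2 hT.1.ne') two_ne_zero, Real.log_pow] at h
  rw [lurothCylinderLength_succ, Real.log_mul (lurothCylinderLength_pos hd n).ne'
    (lurothBranchLength_pos (hd n)).ne']
  push_cast at h
  linarith

end FirstDigitBounds

lemma frequently_iterate_le_rpow {x : ℝ} (hx : x ∈ Ioc (0 : ℝ) 1) {β b : ℝ} (hb : 1 + 2 * β < b)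
    (h : ¬ (fun k => Real.log (lurothDigits x k)) =o[atTop] fun k => b ^ k) :
    ∃ᶠ n in atTop, lurothT^[n] x ≤ lurothCylinderLength (lurothDigits x) n ^ β := by
  have hLpos := lurothCylinderLength_pos (two_le_lurothDigits hx)
  rcases le_or_gt β 0 with hβ | hβ
  · exact Frequently.of_forall fun n => (lurothT_iterate_mem hx n).2.trans
      (Real.one_le_rpow_of_pos_of_le_one_of_nonpos (hLpos n)
        (lurothCylinderLength_le_one (two_le_lurothDigits hx) n) hβ)
  contrapose! h
  set ℓ : ℕ → ℝ := fun n => -Real.log (lurothCylinderLength (lurothDigits x) n)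
  have hℓ0 : ∀ n, 0 ≤ ℓ n := neg_log_lurothCylinderLength_nonneg hx
  have hlogT : ∀ᶠ n in atTop, -Real.log (lurothT^[n] x) ≤ β * ℓ n := h.mono fun n hn => by
    have := Real.log_le_log (Real.rpow_pos_of_pos (hLpos n) β) hn.le
    rw [Real.log_rpow (hLpos n)] at this
    linarith
  have hℓo : ℓ =o[atTop] fun n => b ^ n :=
    isLittleO_pow_of_eventually_le_mul_add hℓ0 (by linarith) hb (Real.log_nonneg one_le_two)
      (hlogT.mono fun n hn => by linarith [neg_log_lurothCylinderLength_succ_le hx n])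
  have hconst : (fun _ : ℕ => Real.log 2) =o[atTop] fun n => b ^ n :=
    isLittleO_const_left.2 (Or.inr (tendsto_norm_atTop_atTop.comp
      (tendsto_pow_atTop_atTop_of_one_lt (by linarith))))
  refine IsBigO.trans_isLittleO (IsBigO.of_bound 1 ?_) ((hℓo.const_mul_left β).add hconst)
  filter_upwards [hlogT] with n hn
  have hd := Real.log_natCast_nonneg (lurothDigits x n)
  have := log_lurothDigits_le hx n
  rw [one_mul, Real.norm_of_nonneg hd]
  exact (by linarith : _ ≤ β * ℓ n + Real.log 2).trans (Real.le_norm_self _)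

section UpperBound

variable {ψ : ℕ → ℝ} (hψ : Tendsto ψ atTop atTop)
include hψ

lemma eventually_half_le_log_lurothDigits {x : ℝ} (hx : x ∈ lurothEinf ψ) :
    ∀ᶠ k in atTop, ψ (k + 1) / 2 ≤ Real.log (lurothDigits x k) := by
  have hpos := ((tendsto_add_atTop_iff_nat 1).2 hψ).eventually_gt_atTop 0
  have hbdd : IsBoundedUnder (· ≥ ·) atTop
      fun k => Real.log (lurothDigits x k) / ψ (k + 1) :=
    isBoundedUnder_of_eventually_ge (hpos.mono fun k hk =>
      div_nonneg (Real.log_natCast_nonneg _) hk.le)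
  have hhalf : (1 / 2 : ℝ) < liminf (fun k => Real.log (lurothDigits x k) / ψ (k + 1)) atTop := by
    rw [(mem_lurothEinf_iff.1 hx).2]
    norm_num
  filter_upwards [eventually_lt_of_lt_liminf hhalf hbdd, hpos] with k hk hk0
  rw [lt_div_iff₀ hk0] at hk
  linarith

lemma tendsto_lurothDigits_atTop {x : ℝ} (hx : x ∈ lurothEinf ψ) :
    Tendsto (lurothDigits x) atTop atTop := by
  have hlog : Tendsto (fun k => Real.log (lurothDigits x k)) atTop atTop :=
    tendsto_atTop_mono' _ (eventually_half_le_log_lurothDigits hψ hx)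
      (((tendsto_add_atTop_iff_nat 1).2 hψ).atTop_div_const two_pos)
  refine tendsto_natCast_atTop_iff.1 (tendsto_atTop_mono (fun k => ?_) hlog)
  exact Real.log_le_self (Nat.cast_nonneg _)

lemma not_isLittleO_log_lurothDigits {x : ℝ} (hx : x ∈ lurothEinf ψ) {r : ℝ} (hr : r ≠ 0)
    (h : ¬ ψ =o[atTop] fun n => r ^ n) :
    ¬ (fun k => Real.log (lurothDigits x k)) =o[atTop] fun k => r ^ k := by
  contrapose! h
  rw [← isLittleO_succ_pow_iff hr]
  refine IsBigO.trans_isLittleO (IsBigO.of_bound 2 ?_) h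
  filter_upwards [eventually_half_le_log_lurothDigits hψ hx,
    ((tendsto_add_atTop_iff_nat 1).2 hψ).eventually_ge_atTop 0] with k hk hk0
  rw [Real.norm_of_nonneg hk0, Real.norm_of_nonneg (Real.log_natCast_nonneg _)]
  linarith

lemma dimH_lurothEinf_le {r : ℝ≥0} (hr : 0 < r) (h : ¬ ψ =o[atTop] fun n => (r : ℝ) ^ n) :
    dimH (lurothEinf ψ) ≤ 1 / (1 + r) := by
  refine le_of_forall_gt_imp_ge_of_dense fun s' hs' => ?_
  obtain ⟨s, hrs, hss'⟩ := ENNReal.lt_iff_exists_nnreal_btwn.1 hs'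
  have hrs' : 1 / (1 + (r : ℝ)) < s := by
    rw [← ENNReal.coe_one, ← ENNReal.coe_add, ← ENNReal.coe_div (by positivity)] at hrs
    exact_mod_cast hrs
  have hs : (0 : ℝ) < s := hrs'.trans' (by positivity)
  rw [div_lt_comm₀ (by positivity) hs] at hrs'
  obtain ⟨β, hβs, hβr⟩ := exists_between (show 1 / (2 * s) - 1 < ((r : ℝ) - 1) / 2 by
    rw [mul_comm, ← div_div]
    linarith)
  rw [sub_lt_iff_lt_add', ← div_div, div_lt_iff₀ hs] at hβs
  refine ((dimH_setOf_tendsto_lurothDigits_le hβs).trans' (dimH_mono fun x hx => ?_)).trans hss'.le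
  have hx01 := (mem_lurothEinf_iff.1 hx).1
  exact ⟨hx01, tendsto_lurothDigits_atTop hψ hx, frequently_iterate_le_rpow hx01 (by linarith)
    (not_isLittleO_log_lurothDigits hψ hx (NNReal.coe_ne_zero.2 hr.ne') h)⟩

end UpperBound

/-! ### The lower bound -/

/-- The orbit of `y` under the maps `t ↦ {s n * t}` that generate its Cantor series expansion in
the bases `s 0, s 1, …`. -/
noncomputable def cantorOrbit (s : ℕ → ℕ) (y : ℝ) : ℕ → ℝ
  | 0 => y
  | n + 1 => Int.fract (s n * cantorOrbit s y n)

/-- The digits of the Cantor series expansion of `y ∈ [0, 1)` in the bases `s 0, s 1, …`. -/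
noncomputable def cantorDigit (s : ℕ → ℕ) (y : ℝ) (n : ℕ) : ℕ := ⌊s n * cantorOrbit s y n⌋₊

/-- The number `s 0 ⋯ s (n - 1)` of Cantor series cylinders of order `n`, each of which has length
`1 / cantorScale s n`. -/
def cantorScale (s : ℕ → ℕ) (n : ℕ) : ℝ := ∏ k ∈ Finset.range n, (s k : ℝ)

lemma cantorScale_succ (s : ℕ → ℕ) (n : ℕ) : cantorScale s (n + 1) = cantorScale s n * s n :=
  Finset.prod_range_succ _ n

lemma cantorScale_pos {s : ℕ → ℕ} (hs : ∀ k, 0 < s k) (n : ℕ) : 0 < cantorScale s n :=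
  Finset.prod_pos fun k _ => by exact_mod_cast hs k

lemma cantorOrbit_mem (s : ℕ → ℕ) {y : ℝ} (hy : y ∈ Ico (0 : ℝ) 1) (n : ℕ) :
    cantorOrbit s y n ∈ Ico (0 : ℝ) 1 := by
  cases n with
  | zero => exact hy
  | succ n => exact ⟨Int.fract_nonneg _, Int.fract_lt_one _⟩

lemma cantorDigit_lt {s : ℕ → ℕ} {n : ℕ} (hs : 0 < s n) {y : ℝ} (hy : y ∈ Ico (0 : ℝ) 1) :
    cantorDigit s y n < s n := by
  have h := cantorOrbit_mem s hy n
  rw [cantorDigit, Nat.floor_lt (mul_nonneg (s n).cast_nonneg h.1)]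
  exact mul_lt_of_lt_one_right (by exact_mod_cast hs) h.2

lemma mul_cantorOrbit_eq (s : ℕ → ℕ) {y : ℝ} (hy : y ∈ Ico (0 : ℝ) 1) (n : ℕ) :
    s n * cantorOrbit s y n = cantorDigit s y n + cantorOrbit s y (n + 1) := by
  rw [cantorDigit, natCast_floor_eq_intCast_floor
    (mul_nonneg (s n).cast_nonneg (cantorOrbit_mem s hy n).1)]
  exact (Int.floor_add_fract _).symm

section CantorSeries

variable {s : ℕ → ℕ} {y z : ℝ} (hy : y ∈ Ico (0 : ℝ) 1) (hz : z ∈ Ico (0 : ℝ) 1)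
include hy hz

lemma abs_cantorOrbit_sub_le_one (n : ℕ) : |cantorOrbit s y n - cantorOrbit s z n| ≤ 1 :=
  abs_sub_le_of_nonneg_of_le (cantorOrbit_mem s hy n).1 (cantorOrbit_mem s hy n).2.le
    (cantorOrbit_mem s hz n).1 (cantorOrbit_mem s hz n).2.le

lemma cantorScale_mul_sub_eq {n : ℕ} (h : ∀ k < n, cantorDigit s y k = cantorDigit s z k) :
    cantorScale s n * (y - z) = cantorOrbit s y n - cantorOrbit s z n := by
  induction n with
  | zero => simp [cantorScale, cantorOrbit]
  | succ n ih =>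
    have hyn := mul_cantorOrbit_eq s hy n
    rw [h n n.lt_succ_self] at hyn
    rw [cantorScale_succ]
    linear_combination (s n : ℝ) * ih (fun k hk => h k (by omega)) + hyn -
      mul_cantorOrbit_eq s hz n

lemma cantorScale_mul_abs_sub_le_one {n : ℕ}
    (h : ∀ k < n, cantorDigit s y k = cantorDigit s z k) : cantorScale s n * |y - z| ≤ 1 := by
  have hP : 0 ≤ cantorScale s n := Finset.prod_nonneg fun k _ => (s k).cast_nonneg
  rw [← abs_of_nonneg hP, ← abs_mul, cantorScale_mul_sub_eq hy hz h]
  exact abs_cantorOrbit_sub_le_one hy hz n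

lemma cantorScale_succ_mul_abs_sub_le {n : ℕ}
    (h : ∀ k < n, cantorDigit s y k = cantorDigit s z k)
    (hlt : cantorDigit s y n < cantorDigit s z n) :
    cantorScale s (n + 1) * |y - z| ≤ 2 * (cantorDigit s z n - cantorDigit s y n) := by
  have hP : 0 ≤ cantorScale s (n + 1) := Finset.prod_nonneg fun k _ => (s k).cast_nonneg
  have hlt' : (cantorDigit s y n : ℝ) + 1 ≤ cantorDigit s z n := by exact_mod_cast hlt
  have heq : cantorScale s (n + 1) * (y - z) =
      (cantorDigit s y n - cantorDigit s z n) +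
        (cantorOrbit s y (n + 1) - cantorOrbit s z (n + 1)) := by
    rw [cantorScale_succ]
    linear_combination (s n : ℝ) * cantorScale_mul_sub_eq hy hz h + mul_cantorOrbit_eq s hy n -
      mul_cantorOrbit_eq s hz n
  have horbit := abs_le.1 (abs_cantorOrbit_sub_le_one (s := s) hy hz (n + 1))
  rw [← abs_of_nonneg hP, ← abs_mul, heq, abs_le]
  constructor <;> linarith

lemma exists_first_cantorDigit_ne (hs : ∀ k, 2 ≤ s k) (hyz : y ≠ z) :
    ∃ n, cantorDigit s y n ≠ cantorDigit s z n ∧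
      ∀ k < n, cantorDigit s y k = cantorDigit s z k := by
  suffices hex : ∃ n, cantorDigit s y n ≠ cantorDigit s z n by
    classical
    exact ⟨Nat.find hex, Nat.find_spec hex, fun k hk => not_not.1 (Nat.find_min hex hk)⟩
  by_contra! heq
  have hlim : Tendsto (fun n : ℕ => (2 : ℝ) ^ n * |y - z|) atTop atTop :=
    (tendsto_pow_atTop_atTop_of_one_lt (by norm_num)).atTop_mul_const
      (abs_pos.2 (sub_ne_zero.2 hyz))
  obtain ⟨n, hn⟩ := (hlim.eventually_gt_atTop 1).exists
  have hscale : (2 : ℝ) ^ n ≤ cantorScale s n :=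
    calc (2 : ℝ) ^ n = ∏ _k ∈ Finset.range n, (2 : ℝ) := by simp
      _ ≤ _ := Finset.prod_le_prod (fun _ _ => by norm_num) fun k _ => by exact_mod_cast hs k
  have := cantorScale_mul_abs_sub_le_one hy hz fun k (_ : k < n) => heq k
  exact (hn.trans_le (by gcongr)).not_ge this

end CantorSeries

/-- The point with Lüroth digits `s k + c k`, where `c` are the digits of the Cantor series of `y`
in the bases `s`; its `k`-th digit thus ranges over `s k, …, 2 * s k - 1`. -/
noncomputable def cantorToLuroth (s : ℕ → ℕ) (y : ℝ) : ℝ :=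
  lurothSeries fun k => s k + cantorDigit s y k

lemma div_le_sub_of_lurothD1_lt {x y : ℝ} (hx : x ∈ Ioc (0 : ℝ) 1) (hy : y ∈ Ioc (0 : ℝ) 1)
    (hlt : lurothD1 x < lurothD1 y) (hT : lurothT y ≤ 1 / 2) :
    ((lurothD1 y : ℝ) - lurothD1 x) / (2 * (lurothD1 x * lurothD1 y)) ≤ x - y := by
  have hd : (2 : ℝ) ≤ lurothD1 x := by exact_mod_cast two_le_lurothD1 hx
  have hde : (lurothD1 x : ℝ) + 1 ≤ lurothD1 y := by exact_mod_cast hlt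
  have hy' := eq_one_div_add_lurothBranchLength_mul_lurothT hy
  have hx' := one_div_lurothD1_lt hx
  set d : ℝ := Nat.cast (lurothD1 x)
  set e : ℝ := Nat.cast (lurothD1 y)
  have hbranch : lurothBranchLength (lurothD1 y) ≤ 1 / (d * e) :=
    one_div_le_one_div_of_le (by nlinarith) (by nlinarith)
  have hTy : lurothBranchLength (lurothD1 y) * lurothT y ≤ 1 / (d * e) * (1 / 2) :=
    mul_le_mul hbranch hT (lurothT_mem hy).1.le (by positivity)
  calc (e - d) / (2 * (d * e)) ≤ (e - d) / (2 * (d * e)) + (e - d - 1) / (2 * (d * e)) :=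
        le_add_of_nonneg_right (div_nonneg (by linarith) (by nlinarith))
    _ = 1 / d - (1 / e + 1 / (d * e) * (1 / 2)) := by
        have : d ≠ 0 := by linarith
        have : e ≠ 0 := by linarith
        field_simp
        ring
    _ ≤ x - y := by linarith

lemma inv_le_lurothCylinderLength {s d : ℕ → ℕ} (hd : ∀ k, 2 ≤ d k) (hds : ∀ k, d k ≤ 2 * s k)
    (n : ℕ) : (4 ^ n * cantorScale s n ^ 2)⁻¹ ≤ lurothCylinderLength d n := by
  have hprod : (4 ^ n * cantorScale s n ^ 2)⁻¹ =
      ∏ k ∈ Finset.range n, (1 / (4 * (s k : ℝ) ^ 2)) := by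
    simp [cantorScale, Finset.prod_mul_distrib, Finset.prod_pow]
  rw [hprod]
  refine Finset.prod_le_prod (fun k _ => by positivity) fun k _ => ?_
  have hdk : (2 : ℝ) ≤ d k := by exact_mod_cast hd k
  have hdsk : (d k : ℝ) ≤ 2 * s k := by exact_mod_cast hds k
  exact one_div_le_one_div_of_le (by nlinarith) (by nlinarith)

lemma div_le_sub_of_lurothDigits_lt {s : ℕ → ℕ} {x y : ℝ} (hx : x ∈ Ioc (0 : ℝ) 1)
    (hy : y ∈ Ioc (0 : ℝ) 1) {n : ℕ} (hxs : ∀ k, lurothDigits x k ≤ 2 * s k)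
    (hys : lurothDigits y n ≤ 2 * s n) (heq : ∀ k < n, lurothDigits x k = lurothDigits y k)
    (hlt : lurothDigits x n < lurothDigits y n) (hT : lurothT^[n + 1] y ≤ 1 / 2) :
    ((lurothDigits y n : ℝ) - lurothDigits x n) / (8 * 4 ^ n * cantorScale s (n + 1) ^ 2) ≤
      x - y := by
  rw [Function.iterate_succ_apply'] at hT
  have hgap : ((lurothDigits y n : ℝ) - lurothDigits x n) /
      (2 * (lurothDigits x n * lurothDigits y n)) ≤ lurothT^[n] x - lurothT^[n] y :=
    div_le_sub_of_lurothD1_lt (lurothT_iterate_mem hx n) (lurothT_iterate_mem hy n) hlt hT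
  have hcyl := inv_le_lurothCylinderLength (two_le_lurothDigits hx) hxs n
  have hd : (2 : ℝ) ≤ lurothDigits x n := by exact_mod_cast two_le_lurothDigits hx n
  have hds : (lurothDigits x n : ℝ) ≤ 2 * s n := by exact_mod_cast hxs n
  have hes : (lurothDigits y n : ℝ) ≤ 2 * s n := by exact_mod_cast hys
  have hde : (lurothDigits x n : ℝ) < lurothDigits y n := by exact_mod_cast hlt
  rw [sub_eq_lurothCylinderLength_mul_sub hx hy heq]
  set d : ℝ := Nat.cast (lurothDigits x n)
  set e : ℝ := Nat.cast (lurothDigits y n)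
  have hden : 2 * (d * e) ≤ 8 * (s n : ℝ) ^ 2 := by
    nlinarith [mul_le_mul hds hes (by linarith) (by positivity)]
  calc (e - d) / (8 * 4 ^ n * cantorScale s (n + 1) ^ 2)
      = (4 ^ n * cantorScale s n ^ 2)⁻¹ * ((e - d) / (8 * (s n : ℝ) ^ 2)) := by
        rw [cantorScale_succ, inv_mul_eq_div, div_div]
        ring
    _ ≤ (4 ^ n * cantorScale s n ^ 2)⁻¹ * ((e - d) / (2 * (d * e))) := by
        have : 0 < d * e := mul_pos (by linarith) (by linarith)
        have : 0 ≤ e - d := by linarith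
        gcongr
    _ ≤ lurothCylinderLength (lurothDigits x) n * (lurothT^[n] x - lurothT^[n] y) := by
        refine mul_le_mul hcyl hgap ?_ (lurothCylinderLength_pos (two_le_lurothDigits hx) n).le
        exact div_nonneg (by linarith) (by nlinarith)

section CantorToLuroth

variable {s : ℕ → ℕ} (hs : ∀ k, 3 ≤ s k)
include hs

lemma cantorToLuroth_mem (y : ℝ) : cantorToLuroth s y ∈ Ioc (0 : ℝ) 1 :=
  lurothSeries_mem fun k => by linarith [hs k]

lemma lurothDigits_cantorToLuroth (y : ℝ) (k : ℕ) :
    lurothDigits (cantorToLuroth s y) k = s k + cantorDigit s y k := by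
  rw [cantorToLuroth, lurothDigits_lurothSeries fun k => by linarith [hs k]]

lemma lurothDigits_cantorToLuroth_lt {y : ℝ} (hy : y ∈ Ico (0 : ℝ) 1) (k : ℕ) :
    lurothDigits (cantorToLuroth s y) k < 2 * s k := by
  rw [lurothDigits_cantorToLuroth hs]
  linarith [cantorDigit_lt (by linarith [hs k]) hy (s := s) (n := k)]

lemma lurothT_iterate_cantorToLuroth_le_half (y : ℝ) (n : ℕ) :
    lurothT^[n] (cantorToLuroth s y) ≤ 1 / 2 := by
  have hT := lurothT_iterate_mem (cantorToLuroth_mem hs y) n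
  refine (le_one_div_lurothD1_sub_one hT).trans (one_div_le_one_div_of_le two_pos ?_)
  have h3 : 3 ≤ lurothDigits (cantorToLuroth s y) n := by
    rw [lurothDigits_cantorToLuroth hs]
    linarith [hs n]
  have : (3 : ℝ) ≤ lurothD1 (lurothT^[n] (cantorToLuroth s y)) := by exact_mod_cast h3
  linarith

variable {y z : ℝ} (hy : y ∈ Ico (0 : ℝ) 1) (hz : z ∈ Ico (0 : ℝ) 1)
include hy hz

lemma sub_cantorDigit_div_le_abs_cantorToLuroth_sub {n : ℕ}
    (heq : ∀ k < n, cantorDigit s y k = cantorDigit s z k)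
    (hlt : cantorDigit s y n < cantorDigit s z n) :
    ((cantorDigit s z n : ℝ) - cantorDigit s y n) / (8 * 4 ^ n * cantorScale s (n + 1) ^ 2) ≤
      |cantorToLuroth s y - cantorToLuroth s z| := by
  have hdy := lurothDigits_cantorToLuroth hs y
  have hdz := lurothDigits_cantorToLuroth hs z
  have hsep := div_le_sub_of_lurothDigits_lt (s := s) (n := n) (cantorToLuroth_mem hs y)
    (cantorToLuroth_mem hs z) (fun k => (lurothDigits_cantorToLuroth_lt hs hy k).le)
    (lurothDigits_cantorToLuroth_lt hs hz n).le (fun k hk => by rw [hdy, hdz, heq k hk])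
    (by rw [hdy, hdz]; omega) (lurothT_iterate_cantorToLuroth_le_half hs z (n + 1))
  rw [hdy, hdz] at hsep
  push_cast at hsep
  rw [add_sub_add_left_eq_sub] at hsep
  exact hsep.trans (le_abs_self _)

lemma exists_abs_sub_le_mul_abs_cantorToLuroth_sub (hyz : y ≠ z) :
    ∃ n, cantorScale s n * |y - z| ≤ 1 ∧
      |y - z| ≤ 4 ^ (n + 2) * cantorScale s (n + 1) *
        |cantorToLuroth s y - cantorToLuroth s z| := by
  obtain ⟨n, hne, heq⟩ := exists_first_cantorDigit_ne hy hz (fun k => by linarith [hs k]) hyz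
  refine ⟨n, cantorScale_mul_abs_sub_le_one hy hz heq, ?_⟩
  wlog hlt : cantorDigit s y n < cantorDigit s z n generalizing y z
  · rw [abs_sub_comm, abs_sub_comm (cantorToLuroth s y)]
    exact this hz hy hyz.symm hne.symm (fun k hk => (heq k hk).symm) (by omega)
  have hP : 0 < cantorScale s (n + 1) := cantorScale_pos (fun k => by linarith [hs k]) _
  have hsep := sub_cantorDigit_div_le_abs_cantorToLuroth_sub hs hy hz heq hlt
  rw [div_le_iff₀ (by positivity)] at hsep
  refine le_of_mul_le_mul_left ?_ hP
  calc cantorScale s (n + 1) * |y - z| ≤ 2 * (cantorDigit s z n - cantorDigit s y n) :=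
        cantorScale_succ_mul_abs_sub_le hy hz heq hlt
    _ ≤ 2 * (|cantorToLuroth s y - cantorToLuroth s z| *
          (8 * 4 ^ n * cantorScale s (n + 1) ^ 2)) := by gcongr
    _ = cantorScale s (n + 1) * (4 ^ (n + 2) * cantorScale s (n + 1) *
          |cantorToLuroth s y - cantorToLuroth s z|) := by ring

lemma abs_sub_le_mul_abs_cantorToLuroth_sub_rpow {σ K : ℝ} (hσ : 0 < σ) (hσ1 : σ ≤ 1)
    (hK : ∀ n, (4 ^ (n + 2) * cantorScale s (n + 1)) ^ σ ≤ K * cantorScale s n ^ (1 - σ)) :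
    |y - z| ≤ K * |cantorToLuroth s y - cantorToLuroth s z| ^ σ := by
  rcases eq_or_ne y z with rfl | hyz
  · simp [Real.zero_rpow hσ.ne']
  obtain ⟨n, hn, hsep⟩ := exists_abs_sub_le_mul_abs_cantorToLuroth_sub hs hy hz hyz
  have hP : ∀ n, 0 < cantorScale s n := cantorScale_pos fun k => by linarith [hs k]
  have hyz0 : 0 < |y - z| := abs_pos.2 (sub_ne_zero.2 hyz)
  set D := |cantorToLuroth s y - cantorToLuroth s z|
  have hD : 0 ≤ D := abs_nonneg _
  calc |y - z| = |y - z| ^ (1 - σ) * |y - z| ^ σ := by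
        rw [← Real.rpow_add hyz0, sub_add_cancel, Real.rpow_one]
    _ ≤ |y - z| ^ (1 - σ) * (4 ^ (n + 2) * cantorScale s (n + 1) * D) ^ σ := by gcongr
    _ = |y - z| ^ (1 - σ) * ((4 ^ (n + 2) * cantorScale s (n + 1)) ^ σ * D ^ σ) := by
        rw [Real.mul_rpow (mul_nonneg (by positivity) (hP _).le) hD]
    _ ≤ |y - z| ^ (1 - σ) * (K * cantorScale s n ^ (1 - σ) * D ^ σ) := by
        gcongr
        exact hK n
    _ = K * (cantorScale s n * |y - z|) ^ (1 - σ) * D ^ σ := by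
        rw [Real.mul_rpow (hP n).le hyz0.le]
        ring
    _ ≤ K * D ^ σ := by
        have hK0 : 0 ≤ K := by
          refine le_of_mul_le_mul_right ((zero_mul _).trans_le (le_trans ?_ (hK n)))
            (Real.rpow_pos_of_pos (hP n) (1 - σ))
          exact Real.rpow_nonneg (mul_nonneg (by positivity) (hP _).le) σ
        gcongr
        exact mul_le_of_le_one_right hK0
          (Real.rpow_le_one (mul_nonneg (hP n).le hyz0.le) hn (by linarith))

end CantorToLuroth

lemma le_dimH_cantorToLuroth_image {s : ℕ → ℕ} (hs : ∀ k, 3 ≤ s k) {σ K : ℝ≥0} (hσ : 0 < σ)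
    (hσ1 : σ ≤ 1)
    (hK : ∀ n, (4 ^ (n + 2) * cantorScale s (n + 1)) ^ (σ : ℝ) ≤
      K * cantorScale s n ^ (1 - σ : ℝ)) :
    σ ≤ dimH (cantorToLuroth s '' Ico (0 : ℝ) 1) := by
  have hI : dimH (Ico (0 : ℝ) 1) = 1 := by
    rw [Real.dimH_of_nonempty_interior (by simp), Module.finrank_self, Nat.cast_one]
  rw [← mul_one (σ : ℝ≥0∞), ← hI]
  refine mul_dimH_le_dimH_image (K := K) hσ fun y hy z hz => ?_
  rw [edist_dist, edist_dist, Real.dist_eq, Real.dist_eq,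
    ENNReal.ofReal_rpow_of_nonneg (abs_nonneg _) σ.coe_nonneg, ← ENNReal.ofReal_coe_nnreal,
    ← ENNReal.ofReal_mul K.coe_nonneg]
  exact ENNReal.ofReal_le_ofReal
    (abs_sub_le_mul_abs_cantorToLuroth_sub_rpow hs hy hz hσ hσ1 hK)

lemma exists_nat_log_mem_Icc {u : ℝ} (hu : 0 ≤ u) :
    ∃ m : ℕ, 3 ≤ m ∧ Real.log m ∈ Icc u (u + Real.log 5) := by
  have hceil := Nat.le_ceil (Real.exp u)
  have hceil' := Nat.ceil_lt_add_one (Real.exp_pos u).le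
  have hm : (0 : ℝ) < (⌈Real.exp u⌉₊ + 3 : ℕ) := by positivity
  refine ⟨⌈Real.exp u⌉₊ + 3, by omega, ?_, ?_⟩
  · rw [Real.le_log_iff_exp_le hm]
    push_cast
    linarith
  · rw [Real.log_le_iff_le_exp hm, Real.exp_add, Real.exp_log (by norm_num)]
    push_cast
    linarith [Real.one_le_exp hu]

lemma log_cantorScale {s : ℕ → ℕ} (hs : ∀ k, 0 < s k) (n : ℕ) :
    Real.log (cantorScale s n) = ∑ k ∈ Finset.range n, Real.log (s k) :=
  Real.log_prod fun k _ => by exact_mod_cast (hs k).ne'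

lemma exists_cantorScale_rpow_le {s : ℕ → ℕ} (hs : ∀ k, 0 < s k) {u : ℕ → ℝ} {W c σ : ℝ}
    (hu : Tendsto u atTop atTop) (huW : ∀ k, u (k + 1) ≤ W * u k) (hW : 1 ≤ W)
    (hsu : ∀ k, Real.log (s k) ∈ Icc (u k) (u k + c)) (hσ : 0 ≤ σ) (hσW : σ * (1 + W) < 1) :
    ∃ K : ℝ≥0, ∀ n, (4 ^ (n + 2) * cantorScale s (n + 1)) ^ σ ≤
      K * cantorScale s n ^ (1 - σ) := by
  have hP : ∀ n, 0 < cantorScale s n := cantorScale_pos hs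
  have hlog : Tendsto (fun k => Real.log (s k)) atTop atTop :=
    tendsto_atTop_mono (fun k => (hsu k).1) hu
  obtain ⟨b, hb⟩ := bddBelow_range_sum_of_eventually_nonneg
    (f := fun k => (1 - σ * (1 + W)) * Real.log (s k) - σ * Real.log 4) <| by
      filter_upwards [(hlog.const_mul_atTop (sub_pos.2 hσW)).eventually_ge_atTop (σ * Real.log 4)]
        with k hk using sub_nonneg.2 hk
  refine ⟨.mk (Real.exp (σ * (2 * Real.log 4 + u 0 + c) - b)) (Real.exp_pos _).le, fun n => ?_⟩
  have hbn := hb (mem_range_self n)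
  simp only [Finset.sum_sub_distrib, ← Finset.mul_sum, Finset.sum_const, Finset.card_range,
    nsmul_eq_mul, ← log_cantorScale hs] at hbn
  have hlast : Real.log (s n) ≤ u 0 + (W - 1) * Real.log (cantorScale s n) + c := by
    have hsum : ∑ k ∈ Finset.range n, u k ≤ Real.log (cantorScale s n) := by
      rw [log_cantorScale hs]
      exact Finset.sum_le_sum fun k _ => (hsu k).1
    linarith [(hsu n).2, le_add_mul_sum_of_le_mul huW n,
      mul_le_mul_of_nonneg_left hsum (sub_nonneg.2 hW)]
  have hsn : (0 : ℝ) < s n := by exact_mod_cast hs n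
  rw [NNReal.coe_mk, Real.rpow_def_of_pos (mul_pos (by positivity) (hP _)),
    Real.rpow_def_of_pos (hP n), ← Real.exp_add, Real.exp_le_exp, cantorScale_succ,
    Real.log_mul (by positivity) (mul_pos (hP n) hsn).ne', Real.log_mul (hP n).ne' hsn.ne',
    Real.log_pow]
  push_cast
  linarith [mul_le_mul_of_nonneg_left hlast hσ]

lemma cantorToLuroth_image_subset_lurothEinf {s : ℕ → ℕ} (hs : ∀ k, 3 ≤ s k) {ψ : ℕ → ℝ} {B : ℝ}
    (hψ : Tendsto ψ atTop atTop) (hle : ∀ k, ψ (k + 1) ≤ Real.log (s k))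
    (hfreq : ∃ᶠ k in atTop, Real.log (s k) ≤ ψ (k + 1) + B) :
    cantorToLuroth s '' Ico 0 1 ⊆ lurothEinf ψ := by
  rintro _ ⟨y, hy, rfl⟩
  have hs0 : ∀ k, (0 : ℝ) < s k := fun k => by exact_mod_cast (by linarith [hs k] : 0 < s k)
  refine mem_lurothEinf_iff.2 ⟨cantorToLuroth_mem hs y,
    liminf_div_eq_one_of_frequently_le (B := B + Real.log 2)
      (hψ.comp (tendsto_add_atTop_nat 1)) (Eventually.of_forall fun k => ?_)
      (hfreq.mono fun k hk => ?_)⟩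
  · refine (hle k).trans (Real.log_le_log (hs0 k) ?_)
    rw [lurothDigits_cantorToLuroth hs]
    exact_mod_cast Nat.le_add_right _ _
  · have hlt : (lurothDigits (cantorToLuroth s y) k : ℝ) ≤ 2 * s k := by
      exact_mod_cast (lurothDigits_cantorToLuroth_lt hs hy k).le
    have hpos : (0 : ℝ) < lurothDigits (cantorToLuroth s y) k := by
      exact_mod_cast two_pos.trans_le (two_le_lurothDigits (cantorToLuroth_mem hs y) k)
    have hlog := Real.log_le_log hpos hlt
    rw [Real.log_mul two_ne_zero (hs0 k).ne'] at hlog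
    linarith

lemma le_dimH_lurothEinf {ψ : ℕ → ℝ} (hpos : ∀ n : ℕ, 1 ≤ n → 0 < ψ n)
    (hψ : Tendsto ψ atTop atTop) {r : ℝ≥0} (hr : 1 ≤ r)
    (h : ψ =o[atTop] fun n => (r : ℝ) ^ n) : 1 / (1 + r) ≤ dimH (lurothEinf ψ) := by
  have hr0 : (0 : ℝ) < r := by exact_mod_cast one_pos.trans_le hr
  have hφ : ∀ k, 0 < ψ (k + 1) := fun k => hpos _ (by omega)
  obtain ⟨u, hψu, huW, hfreq⟩ :=
    exists_majorant_le_mul hφ hr0 ((isLittleO_succ_pow_iff hr0.ne').2 h)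
  have hu : Tendsto u atTop atTop :=
    tendsto_atTop_mono hψu (hψ.comp (tendsto_add_atTop_nat 1))
  choose s hs3 hsu using fun k => exists_nat_log_mem_Icc ((hφ k).le.trans (hψu k))
  have hsub : cantorToLuroth s '' Ico 0 1 ⊆ lurothEinf ψ :=
    cantorToLuroth_image_subset_lurothEinf hs3 hψ (fun k => (hψu k).trans (hsu k).1)
      (hfreq.mono fun k hk => hk ▸ (hsu k).2)
  refine ENNReal.le_of_forall_nnreal_lt fun σ hσ => ?_
  rcases eq_zero_or_pos σ with rfl | hσ0
  · simp
  have hσr : σ * (1 + r) < 1 := by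
    rw [ENNReal.lt_div_iff_mul_lt (by simp) (by simp)] at hσ
    exact_mod_cast hσ
  obtain ⟨K, hK⟩ := exists_cantorScale_rpow_le (fun k => by linarith [hs3 k]) hu huW
    (by exact_mod_cast hr) hsu σ.coe_nonneg (by exact_mod_cast hσr)
  have hσ1 : σ ≤ 1 := (le_mul_of_one_le_right' le_self_add).trans hσr.le
  exact (le_dimH_cantorToLuroth_image hs3 hσ0 hσ1 hK).trans (dimH_mono hsub)

theorem dimH_luroth_Einf_psi (ψ : ℕ → ℝ) (hpos : ∀ n : ℕ, 1 ≤ n → 0 < ψ n)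
    (hψ : Tendsto ψ atTop atTop) (V : ℝ≥0∞)
    (hV : ENNReal.log V =
      Filter.limsup (fun n : ℕ => ((Real.log (ψ n) / n : ℝ) : EReal)) atTop) :
    dimH {x : ℝ | x ∈ Set.Ioc (0 : ℝ) 1 ∧
        Filter.liminf (fun n : ℕ => Real.log (lurothDigit n x) / ψ n) atTop = 1}
      = 1 / (1 + V) := by
  change dimH (lurothEinf ψ) = 1 / (1 + V)
  have hV1 : 1 ≤ V := one_le_of_log_eq_limsup hψ hV
  refine eq_one_div_one_add_of_forall (one_pos.trans_le hV1).ne' (fun r hr0 hr => ?_)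
    fun r hr => ?_
  · exact dimH_lurothEinf_le hψ hr0 (not_isLittleO_pow_of_lt_limsup hψ hV hr0 hr)
  · have hr1 : 1 ≤ r := by exact_mod_cast hV1.trans hr.le
    exact le_dimH_lurothEinf hpos hψ hr1 (isLittleO_pow_of_limsup_lt hψ hV hr)
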